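/- Right-inverse and kernel identities: under (H0), (i) for every f ∈ L¹[−1,1] the function u = I^ψ_+ f, with u and its derivative u' extended by zero outside [−1,1], satisfies for a.e. x ∈ (−1,1): (d/dx) ∫_0^{x+1} Φ(y) u'(x−y) dy = f(x) and (d²/dx²) ∫_0^{x+1} Φ(y) u(x−y) dy = f(x); (ii) for every x ∈ (−1,1): (d²/dx²)(Φ ⋆ k₋₁⁺)(x) = 0, (d²/dx²)(Φ ⋆ k₀⁺)(x) = 0, and (d/dx)(Φ ⋆ k₋₁⁺)(x) = 0 (the last identity expressing ∂^ψ_+ k₀⁺ = 0, since (k₀⁺)' = k₋₁⁺). -/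

import Mathlib

open MeasureTheory Set Filter Topology

noncomputable section

/-- The tail `φ((y, ∞))` of the Lévy measure `φ`. -/
def levyTail (φ : Measure ℝ) (y : ℝ) : ℝ := (φ (Ioi y)).toReal

/-- The function `Φ(x) = ∫_x^∞ φ((y,∞)) dy` for `x > 0`, and `0` for `x ≤ 0`. -/
def PhiFn (φ : Measure ℝ) (x : ℝ) : ℝ :=
  if 0 < x then ∫ y in Ioi x, levyTail φ y else 0

/-- The Laplace exponent `ψ(ξ) = ξ² ∫_0^∞ e^{-ξ x} Φ(x) dx`. -/
def psiFn (φ : Measure ℝ) (ξ : ℂ) : ℂ :=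
  ξ ^ 2 * ∫ x in Ioi (0 : ℝ), Complex.exp (-ξ * (x : ℂ)) * (PhiFn φ x : ℂ)

/-- Assumption (H0): `φ` is a nonnegative Borel measure on `(0,∞)` with
`∫ (z² ∧ z) φ(dz) < ∞` and `∫_{(0,1)} z φ(dz) = ∞`. -/
def H0 (φ : Measure ℝ) : Prop :=
  φ (Iic 0) = 0 ∧
  (∫⁻ z in Ioi (0 : ℝ), ENNReal.ofReal (min (z ^ 2) z) ∂φ) < ⊤ ∧
  (∫⁻ z in Ioo (0 : ℝ) 1, ENNReal.ofReal z ∂φ) = ⊤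

/-- The defining properties of the scale kernel `k₋₁⁺` (extension by zero to `(-∞,-1)`
of the scale function `k₋₁` of Lemma 3.1): nonnegative on `[-1,∞)`, continuous on
`(-1,∞)`, locally integrable, of sub-exponential growth, with Laplace transform
`∫_0^∞ e^{-ξ y} k₋₁(y-1) dy = ξ/ψ(ξ)` on `{Re ξ > 0}`. -/
def IsScaleKernel (φ : Measure ℝ) (k : ℝ → ℝ) : Prop :=
  (∀ x : ℝ, x < -1 → k x = 0) ∧
  (∀ x : ℝ, -1 ≤ x → 0 ≤ k x) ∧
  ContinuousOn k (Ioi (-1)) ∧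
  LocallyIntegrableOn k (Ici (-1)) ∧
  (∀ ε : ℝ, 0 < ε → Tendsto (fun x : ℝ => Real.exp (-ε * x) * k x) atTop (nhds 0)) ∧
  ∀ ξ : ℂ, 0 < ξ.re →
    IntegrableOn (fun y : ℝ => Complex.exp (-ξ * (y : ℂ)) * (k (y - 1) : ℂ)) (Ioi 0) ∧
    (∫ y in Ioi (0 : ℝ), Complex.exp (-ξ * (y : ℂ)) * (k (y - 1) : ℂ)) = ξ / psiFn φ ξ

/-- Iterated antiderivatives: `kIter k 0 = k₋₁⁺` and `kIter k (n+1) = I₊ (kIter k n)`,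
so that `kₙ⁺ = kIter k (n+1)` for `n ≥ -1`. -/
def kIter (k : ℝ → ℝ) : ℕ → ℝ → ℝ
  | 0 => k
  | m + 1 => fun x => ∫ y in Iic x, kIter k m y

/-!
Write `κ(x) = k₋₁⁺(x - 1)`. The Laplace transforms of `Φ` and `κ` multiply to `1 / ξ`, so the finite
measures `e^{-x} Φ(x) dx` and `e^{-x} κ(x) dx` convolve to `e^{-x} dx` on the half-line, because
their characteristic functions do. Hence `Φ ⋆ κ = 1` almost everywhere on `(0, ∞)`, and everywhere
there since `Φ ⋆ κ` is continuous on `(0, ∞)`.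

Shifted back by one, `Φ ⋆ k₋₁⁺ = 1` and therefore `Φ ⋆ k₀⁺ (x) = x + 1` on `(-1, ∞)`, which gives
the kernel identities. By associativity, `Φ ⋆ (κ ⋆ f) = 1_{[0,∞)} ⋆ f` is the primitive of `f`, and
with the primitive of `κ` in place of `κ` it is the twice iterated primitive. Lebesgue
differentiation concludes.
-/

open scoped Convolution ENNReal

/-! ### Convolution on the half-line -/

/-- The Heaviside function `1_{[0,∞)}`: convolving with it is integrating from `-∞`. -/
def heaviside : ℝ → ℝ := (Ici 0).indicator 1

lemma heaviside_sub (x y : ℝ) : heaviside (x - y) = (Iic x).indicator 1 y := by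
  simp only [heaviside, indicator_apply, mem_Ici, mem_Iic, sub_nonneg, Pi.one_apply]

lemma convolution_heaviside (f : ℝ → ℝ) (x : ℝ) : (f ⋆ heaviside) x = ∫ y in Iic x, f y := by
  rw [convolution_lsmul, ← integral_indicator measurableSet_Iic]
  simp only [heaviside_sub, smul_eq_mul, ← indicator_mul_right, Pi.one_apply, mul_one]

lemma heaviside_convolution (f : ℝ → ℝ) (x : ℝ) : (heaviside ⋆ f) x = ∫ y in Iic x, f y := by
  rw [convolution_lsmul_swap, ← integral_indicator measurableSet_Iic]
  simp only [heaviside_sub, smul_eq_mul, ← indicator_mul_left, Pi.one_apply, one_mul]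

lemma convolutionExistsAt_heaviside {f : ℝ → ℝ} {x : ℝ} (hf : IntegrableOn f (Iic x)) :
    ConvolutionExistsAt f heaviside x (ContinuousLinearMap.lsmul ℝ ℝ) := by
  refine (hf.integrable_indicator measurableSet_Iic).congr (ae_of_all _ fun y => ?_)
  simp only [ContinuousLinearMap.lsmul_apply, heaviside_sub, smul_eq_mul, ← indicator_mul_right,
    Pi.one_apply, mul_one]

lemma heaviside_convolutionExistsAt {f : ℝ → ℝ} {x : ℝ} (hf : IntegrableOn f (Iic x)) :
    ConvolutionExistsAt heaviside f x (ContinuousLinearMap.lsmul ℝ ℝ) := by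
  refine convolutionExistsAt_iff_integrable_swap.2 ?_
  refine (hf.integrable_indicator measurableSet_Iic).congr (ae_of_all _ fun y => ?_)
  simp only [ContinuousLinearMap.lsmul_apply, heaviside_sub, smul_eq_mul, ← indicator_mul_left,
    Pi.one_apply, one_mul]

section HalfLine

variable {f g : ℝ → ℝ} {a b x : ℝ}

lemma convolution_eq_zero_of_lt (hf : ∀ y < a, f y = 0) (hg : ∀ y < b, g y = 0) (hx : x < a + b) :
    (f ⋆ g) x = 0 := by
  rw [convolution_lsmul]
  refine integral_eq_zero_of_ae (ae_of_all _ fun y => ?_)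
  rcases lt_or_ge y a with hy | hy
  · simp [hf y hy]
  · simp [hg (x - y) (by linarith)]

lemma convolution_eq_intervalIntegral (hf : ∀ y < a, f y = 0) (hg : ∀ y < b, g y = 0)
    (hx : a + b ≤ x) : (f ⋆ g) x = ∫ y in a..(x - b), f y * g (x - y) := by
  rw [convolution_lsmul, intervalIntegral.integral_of_le (by linarith),
    ← integral_Icc_eq_integral_Ioc]
  refine (setIntegral_eq_integral_of_forall_compl_eq_zero fun y hy => ?_).symm
  rcases lt_or_ge y a with hya | hya
  · rw [hf y hya, zero_smul]
  · rw [hg (x - y) (by linarith [lt_of_not_ge fun h => hy ⟨hya, h⟩]), smul_zero]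

lemma convolution_eq_intervalIntegral_swap (hf : ∀ y < a, f y = 0) (hg : ∀ y < b, g y = 0)
    (hx : a + b ≤ x) : (f ⋆ g) x = ∫ y in b..(x - a), f (x - y) * g y := by
  rw [convolution_eq_intervalIntegral hf hg hx]
  simpa only [sub_sub_cancel] using
    (intervalIntegral.integral_comp_sub_left (fun y => f y * g (x - y)) x (a := b)
      (b := x - a)).symm

lemma measurable_of_continuousOn_Ioi (hf : ∀ y < a, f y = 0) (hc : ContinuousOn f (Ioi a)) :
    Measurable f := by
  refine measurable_of_continuousOn_compl_singleton a ?_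
  rw [← Iio_union_Ioi]
  exact ((continuousOn_const (c := 0)).congr hf).union_of_isOpen hc isOpen_Iio isOpen_Ioi

/-- The truncation of the potential `q ⋆ f` to `[a, b]` is invisible to a convolution on the
positive half-line evaluated inside `[a, b]`. -/
lemma integral_mul_indicator_potential {p q : ℝ → ℝ} (hp : ∀ y < 0, p y = 0)
    (hq : ∀ y < 0, q y = 0) (f : ℝ → ℝ) (hx : x ∈ Icc a b) :
    ∫ y in (0 : ℝ)..(x - a), p y *
        (Icc a b).indicator (fun t => ∫ s in a..t, q (t - s) * f s) (x - y) =
      (p ⋆ (q ⋆ (Icc a b).indicator f)) x := by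
  have hf : ∀ y < a, (Icc a b).indicator f y = 0 := fun y hy =>
    indicator_of_notMem (fun h => hy.not_ge h.1) f
  rw [convolution_eq_intervalIntegral hp
    (fun y hy => convolution_eq_zero_of_lt hq hf (by linarith)) (by linarith [hx.1])]
  refine intervalIntegral.integral_congr fun y hy => ?_
  rw [uIcc_of_le (by linarith [hx.1])] at hy
  have hxy : x - y ∈ Icc a b := ⟨by linarith [hy.2], by linarith [hy.1, hx.2]⟩
  rw [indicator_of_mem hxy, convolution_eq_intervalIntegral_swap hq hf (by linarith [hxy.1]),
    sub_zero]
  congr 1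
  refine intervalIntegral.integral_congr fun s hs => ?_
  rw [uIcc_of_le hxy.1] at hs
  rw [indicator_of_mem (show s ∈ Icc a b from ⟨hs.1, hs.2.trans hxy.2⟩)]

end HalfLine

lemma exists_continuous_cutoff {a b c d : ℝ} (hac : a < c) (hdb : d < b) :
    ∃ χ : ℝ → ℝ, Continuous χ ∧ HasCompactSupport χ ∧ tsupport χ ⊆ Ioo a b ∧
      EqOn χ 1 (Icc c d) := by
  obtain ⟨χ, hχ, hχ1, -⟩ := exists_tsupport_one_of_isOpen_isClosed (isOpen_Ioo (a := a) (b := b))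
    (isCompact_Icc.closure_of_subset Ioo_subset_Icc_self) (isClosed_Icc (a := c) (b := d))
    (Icc_subset_Ioo hac hdb)
  exact ⟨χ, χ.continuous, .of_support_subset_isCompact isCompact_Icc
    ((subset_tsupport χ).trans (hχ.trans Ioo_subset_Icc_self)), hχ, hχ1⟩

/-- Away from the origin, each summand of `f ⋆ g = f ⋆ (χ g) + (χ f) ⋆ ((1 - χ) g)` has a
continuous compactly supported factor, for a cutoff `χ` vanishing near `0`. -/
lemma continuousOn_convolution_Ioi {f g : ℝ → ℝ} (hf0 : ∀ x < 0, f x = 0)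
    (hg0 : ∀ x < 0, g x = 0) (hf : LocallyIntegrable f) (hg : LocallyIntegrable g)
    (hfc : ContinuousOn f (Ioi 0)) (hgc : ContinuousOn g (Ioi 0)) :
    ContinuousOn (f ⋆ g) (Ioi 0) := by
  intro x (hx : 0 < x)
  obtain ⟨χ, hχc, hχ_compact, hχ, hχ1⟩ := exists_continuous_cutoff
    (show x / 6 < x / 3 by linarith) (show x + 1 < x + 2 by linarith)
  have hχ_mul : ∀ h : ℝ → ℝ, ContinuousOn h (Ioi 0) → Continuous (χ * h) := fun h hh =>
    continuous_of_tsupport fun y hy => hχc.continuousAt.mul <| hh.continuousAt <|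
      Ioi_mem_nhds <| by linarith [(hχ (tsupport_mul_subset_left hy)).1]
  have hg_near : LocallyIntegrable ((1 - χ) * g) :=
    hg.continuous_mul (continuous_const.sub hχc)
  have hcg : HasCompactSupport (χ * g) := hχ_compact.mul_right
  have hcf : HasCompactSupport (χ * f) := hχ_compact.mul_right
  have hsplit : f ⋆ g =ᶠ[𝓝 x] f ⋆ (χ * g) + (χ * f) ⋆ ((1 - χ) * g) := by
    filter_upwards [Ioo_mem_nhds (show 2 * x / 3 < x by linarith) (lt_add_one x)] with z hz
    have hfar := hcg.convolutionExists_right (ContinuousLinearMap.lsmul ℝ ℝ) hf (hχ_mul g hgc) z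
    have hnear := hcf.convolutionExists_left (ContinuousLinearMap.lsmul ℝ ℝ) (hχ_mul f hfc)
      hg_near z
    rw [Pi.add_apply, convolution_def, convolution_def, convolution_def,
      ← integral_add hfar hnear]
    refine integral_congr_ae (ae_of_all _ fun y => ?_)
    simp only [ContinuousLinearMap.lsmul_apply, Pi.mul_apply, Pi.sub_apply, Pi.one_apply,
      smul_eq_mul]
    suffices f y * g (z - y) * ((1 - χ (z - y)) * (1 - χ y)) = 0 by linear_combination this
    rcases lt_or_ge y 0 with hy | hy
    · rw [hf0 y hy, zero_mul, zero_mul]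
    rcases lt_or_ge (z - y) 0 with hzy | hzy
    · rw [hg0 _ hzy, mul_zero, zero_mul]
    rcases lt_or_ge y (x / 3) with hy' | hy'
    · rw [hχ1 ⟨by linarith [hz.1], by linarith [hz.2]⟩, Pi.one_apply, sub_self, zero_mul, mul_zero]
    · rw [hχ1 ⟨hy', by linarith [hz.2]⟩, Pi.one_apply, sub_self, mul_zero, mul_zero]
  exact (((hcg.continuous_convolution_right _ hf (hχ_mul g hgc)).add
    (hcf.continuous_convolution_left _ (hχ_mul f hfc) hg_near)).continuousAt.congr
    hsplit.symm).continuousWithinAt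

/-- For nonnegative `f` and `k`, integrability of the triple product reduces to the existence of
the convolution `(f ⋆ k) ⋆ g` at the point, and no condition on `k ⋆ g` is required. -/
lemma convolution_assoc_of_nonneg {f k g : ℝ → ℝ} {x : ℝ} (hf : Measurable f) (hk : Measurable k)
    (hg : AEStronglyMeasurable g) (hf0 : ∀ y, 0 ≤ f y) (hk0 : ∀ y, 0 ≤ k y)
    (hfk : ∀ᵐ y, ConvolutionExistsAt f k y (ContinuousLinearMap.lsmul ℝ ℝ))
    (hfkg : ConvolutionExistsAt (f ⋆ k) g x (ContinuousLinearMap.lsmul ℝ ℝ)) :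
    ((f ⋆ k) ⋆ g) x = (f ⋆ (k ⋆ g)) x := by
  have hmeas : AEStronglyMeasurable (fun p : ℝ × ℝ => f p.2 * k (x - p.1 - p.2) * g p.1)
      ((volume : Measure ℝ).prod volume) :=
    Measurable.aestronglyMeasurable (by fun_prop) |>.mul hg.comp_fst
  have hint : Integrable (fun p : ℝ × ℝ => f p.2 * k (x - p.1 - p.2) * g p.1)
      ((volume : Measure ℝ).prod volume) := by
    refine (integrable_prod_iff hmeas).2 ⟨?_, ?_⟩
    · filter_upwards [(quasiMeasurePreserving_sub_left volume x).ae hfk] with s hs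
      exact hs.mul_const (g s)
    · refine hfkg.integrable_swap.norm.congr (ae_of_all _ fun s => ?_)
      have hnorm : ∀ y, ‖f y * k (x - s - y) * g s‖ = f y * k (x - s - y) * ‖g s‖ := fun y => by
        rw [norm_mul, Real.norm_of_nonneg (mul_nonneg (hf0 y) (hk0 _))]
      have hfk0 : 0 ≤ (f ⋆ k) (x - s) := integral_nonneg fun y => mul_nonneg (hf0 y) (hk0 _)
      simp only [hnorm, integral_mul_const, ContinuousLinearMap.lsmul_apply, smul_eq_mul, norm_mul,
        Real.norm_of_nonneg hfk0]
      rfl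
  calc ((f ⋆ k) ⋆ g) x = ∫ s, ∫ y, f y * k (x - s - y) * g s := by
        rw [convolution_lsmul_swap]
        simp only [convolution_lsmul, smul_eq_mul, integral_mul_const]
    _ = ∫ y, ∫ s, f y * k (x - s - y) * g s := integral_integral_swap hint
    _ = (f ⋆ (k ⋆ g)) x := by
        rw [convolution_lsmul]
        simp only [convolution_lsmul_swap, smul_eq_mul, mul_assoc, integral_const_mul,
          sub_right_comm x]

/-! ### Laplace transforms of causal kernels -/

/-- The Laplace transform of `f` over the positive half-line. -/
def laplace (f : ℝ → ℝ) (ξ : ℂ) : ℂ := ∫ x in Ioi (0 : ℝ), Complex.exp (-ξ * (x : ℂ)) * (f x : ℂ)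

/-- A nonnegative function supported on `[0, ∞)` whose Laplace transform converges on the right
half-plane `Re ξ > 0`. -/
structure IsCausalKernel (f : ℝ → ℝ) : Prop where
  measurable : Measurable f
  nonneg : ∀ x, 0 ≤ f x
  eq_zero : ∀ x < 0, f x = 0
  integrable_exp_mul : ∀ c > 0, Integrable fun x => Real.exp (-c * x) * f x

/-- The measure with density `e^{-cx} f(x)`. Its characteristic function is the Laplace transform
of `f` along the line `Re ξ = c`. -/
def dampedMeasure (c : ℝ) (f : ℝ → ℝ) : Measure ℝ :=
  volume.withDensity fun x => ENNReal.ofReal (Real.exp (-c * x) * f x)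

lemma isCausalKernel_heaviside : IsCausalKernel heaviside where
  measurable := measurable_one.indicator measurableSet_Ici
  nonneg := indicator_nonneg fun _ _ => zero_le_one
  eq_zero _ hx := indicator_of_notMem (notMem_Ici.2 hx) _
  integrable_exp_mul c hc := by
    refine (((integrableOn_exp_mul_Ioi (neg_lt_zero.2 hc) 0).congr_set_ae
      Ioi_ae_eq_Ici.symm).integrable_indicator measurableSet_Ici).congr (ae_of_all _ fun x => ?_)
    simp only [heaviside, indicator_apply, Pi.one_apply, mul_ite, mul_one, mul_zero]

lemma laplace_heaviside {ξ : ℂ} (hξ : 0 < ξ.re) : laplace heaviside ξ = ξ⁻¹ := by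
  have hcongr : laplace heaviside ξ = ∫ x in Ioi (0 : ℝ), Complex.exp (-ξ * (x : ℂ)) :=
    setIntegral_congr_fun measurableSet_Ioi fun x hx => by
      rw [heaviside, indicator_of_mem (Ioi_subset_Ici_self hx), Pi.one_apply, Complex.ofReal_one,
        mul_one]
  rw [hcongr, integral_exp_mul_complex_Ioi (by simpa using hξ)]
  simp

namespace IsCausalKernel

variable {f g h : ℝ → ℝ} {c : ℝ}

lemma locallyIntegrable (hf : IsCausalKernel f) : LocallyIntegrable f := by
  refine (((hf.integrable_exp_mul 1 one_pos).locallyIntegrable).continuous_mul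
    Real.continuous_exp).congr (ae_of_all _ fun x => ?_)
  beta_reduce
  rw [← mul_assoc, ← Real.exp_add, neg_one_mul, add_neg_cancel, Real.exp_zero,
    one_mul]

lemma integrableOn_Iic (hf : IsCausalKernel f) (x : ℝ) : IntegrableOn f (Iic x) :=
  (hf.locallyIntegrable.integrableOn_isCompact isCompact_Icc).of_forall_sdiff_eq_zero
    measurableSet_Iic fun y hy => hf.eq_zero y (lt_of_not_ge fun h => hy.2 ⟨h, hy.1⟩)

lemma isFiniteMeasure_dampedMeasure (hf : IsCausalKernel f) (hc : 0 < c) :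
    IsFiniteMeasure (dampedMeasure c f) :=
  isFiniteMeasure_withDensity_ofReal (hf.integrable_exp_mul c hc).2

lemma charFun_dampedMeasure (hf : IsCausalKernel f) (c t : ℝ) :
    charFun (dampedMeasure c f) t = laplace f (c - t * Complex.I) := by
  have hfm := hf.measurable
  rw [dampedMeasure, charFun_apply_real, laplace,
    integral_withDensity_eq_integral_toReal_smul (by fun_prop)
      (ae_of_all _ fun _ => ENNReal.ofReal_lt_top), ← integral_Ici_eq_integral_Ioi,
    setIntegral_eq_integral_of_forall_compl_eq_zero fun x hx => by
      rw [hf.eq_zero x (not_le.1 hx), Complex.ofReal_zero, mul_zero]]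
  refine integral_congr_ae (ae_of_all _ fun x => ?_)
  beta_reduce
  rw [ENNReal.toReal_ofReal (mul_nonneg (Real.exp_pos _).le (hf.nonneg x)), Complex.real_smul,
    show -(c - t * Complex.I) * (x : ℂ) = ((-c * x : ℝ) : ℂ) + t * x * Complex.I by
      push_cast; ring, Complex.exp_add, Complex.ofReal_mul, Complex.ofReal_exp]
  ring

lemma continuous_laplace_line (hf : IsCausalKernel f) (hc : 0 < c) :
    Continuous fun t : ℝ => laplace f (c - t * Complex.I) := by
  have := hf.isFiniteMeasure_dampedMeasure hc
  simp only [← hf.charFun_dampedMeasure]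
  exact continuous_charFun

lemma laplace_ofReal_ne_zero (hf : IsCausalKernel f) (hc : 0 < c) (hf_ne : ¬ f =ᵐ[volume] 0) :
    laplace f c ≠ 0 := by
  have hfm := hf.measurable
  have := hf.isFiniteMeasure_dampedMeasure hc
  have hdamped : NeZero (dampedMeasure c f) := ⟨fun h0 => hf_ne <| by
    filter_upwards [(withDensity_eq_zero_iff (by fun_prop)).1 h0] with x hx
    have hx0 : Real.exp (-c * x) * f x ≤ 0 := ENNReal.ofReal_eq_zero.1 hx
    exact (nonpos_of_mul_nonpos_right hx0 (Real.exp_pos _)).antisymm (hf.nonneg x)⟩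
  have h0 := hf.charFun_dampedMeasure c 0
  rw [Complex.ofReal_zero, zero_mul, sub_zero] at h0
  rw [← h0, charFun_zero, Complex.ofReal_ne_zero]
  exact measureReal_univ_ne_zero

/-- Under `hfg`, a zero of `laplace f` on the line is a zero of `laplace g` too, as `0⁻¹ = 0`, and
would make the continuous function `ξ * laplace f ξ * laplace g ξ` jump from `1` to `0`. -/
lemma laplace_mul_laplace_of_eq_inv (hf : IsCausalKernel f) (hg : IsCausalKernel g) (hc : 0 < c)
    (hf_ne : ¬ f =ᵐ[volume] 0)
    (hfg : ∀ t : ℝ, laplace g (c - t * Complex.I) =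
      ((c - t * Complex.I) * laplace f (c - t * Complex.I))⁻¹) (t : ℝ) :
    laplace f (c - t * Complex.I) * laplace g (c - t * Complex.I) = (c - t * Complex.I)⁻¹ := by
  set F : ℝ → ℂ := fun t => (c - t * Complex.I) * laplace f (c - t * Complex.I) *
    laplace g (c - t * Complex.I) with hF
  have hF_cont : Continuous F :=
    (Continuous.mul (by fun_prop) (hf.continuous_laplace_line hc)).mul
      (hg.continuous_laplace_line hc)
  have hF_mem : MapsTo F univ {0, 1} := fun s _ => by
    simp only [hF, hfg]
    by_cases h0 : (c - s * Complex.I) * laplace f (c - s * Complex.I) = 0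
    · exact Or.inl (by rw [h0, zero_mul])
    · exact Or.inr (mul_inv_cancel₀ h0)
  have hF_zero : F 0 = 1 := by
    simp only [hF, hfg, Complex.ofReal_zero, zero_mul, sub_zero]
    exact mul_inv_cancel₀ (mul_ne_zero (Complex.ofReal_ne_zero.2 hc.ne')
      (hf.laplace_ofReal_ne_zero hc hf_ne))
  have hFt : F t = 1 := (isPreconnected_univ.constant_of_mapsTo (Set.toFinite _).isDiscrete
    hF_cont.continuousOn hF_mem (mem_univ t) (mem_univ 0)).trans hF_zero
  exact eq_inv_of_mul_eq_one_right ((mul_assoc _ _ _).symm.trans hFt)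

end IsCausalKernel

lemma lconvolution_exp_mul {f g : ℝ → ℝ} (hf : Measurable f) (hg : Measurable g)
    (hf0 : ∀ x, 0 ≤ f x) (c x : ℝ) :
    ((fun y => ENNReal.ofReal (Real.exp (-c * y) * f y)) ⋆ₗ
        fun y => ENNReal.ofReal (Real.exp (-c * y) * g y)) x =
      ENNReal.ofReal (Real.exp (-c * x)) * ∫⁻ y, ENNReal.ofReal (f y * g (x - y)) := by
  rw [lconvolution_def, ← lintegral_const_mul _ (by fun_prop)]
  refine lintegral_congr fun y => ?_
  rw [← ENNReal.ofReal_mul (mul_nonneg (Real.exp_pos _).le (hf0 y)),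
    ← ENNReal.ofReal_mul (Real.exp_pos _).le, neg_add_eq_sub,
    show -c * x = -c * y + -c * (x - y) by ring, Real.exp_add]
  ring_nf

lemma IsCausalKernel.convolution_ae_eq_of_laplace {f g h : ℝ → ℝ} {c : ℝ} (hf : IsCausalKernel f)
    (hg : IsCausalKernel g) (hh : IsCausalKernel h) (hc : 0 < c)
    (hmul : ∀ t : ℝ, laplace f (c - t * Complex.I) * laplace g (c - t * Complex.I) =
      laplace h (c - t * Complex.I)) :
    f ⋆ g =ᵐ[volume] h := by
  have hfm := hf.measurable
  have hgm := hg.measurable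
  have hhm := hh.measurable
  have := hf.isFiniteMeasure_dampedMeasure hc
  have := hg.isFiniteMeasure_dampedMeasure hc
  have := hh.isFiniteMeasure_dampedMeasure hc
  have hconv : dampedMeasure c f ∗ dampedMeasure c g = dampedMeasure c h :=
    Measure.ext_of_charFun <| funext fun t => by
      rw [charFun_conv, hf.charFun_dampedMeasure, hg.charFun_dampedMeasure,
        hh.charFun_dampedMeasure, hmul]
  rw [dampedMeasure, dampedMeasure, dampedMeasure,
    conv_withDensity_eq_lconvolution (by fun_prop) (by fun_prop),
    withDensity_eq_iff_of_sigmaFinite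
      (measurable_lconvolution _ (by fun_prop) (by fun_prop)).aemeasurable
      (by fun_prop)] at hconv
  filter_upwards [hconv] with x hx
  rw [lconvolution_exp_mul hfm hgm hf.nonneg, ENNReal.ofReal_mul (Real.exp_pos _).le,
    ENNReal.mul_right_inj (by simp [Real.exp_pos]) ENNReal.ofReal_ne_top] at hx
  rw [convolution_lsmul]
  simp only [smul_eq_mul]
  rw [integral_eq_lintegral_of_nonneg_ae (ae_of_all _ fun y => mul_nonneg (hf.nonneg y)
    (hg.nonneg _)) (by fun_prop), hx, ENNReal.toReal_ofReal (hh.nonneg x)]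

/-! ### Primitives -/

section Primitive

variable {f : ℝ → ℝ} {a b x : ℝ}

lemma integral_Iic_eq_intervalIntegral (hf : ∀ y < a, f y = 0) (hx : a ≤ x) :
    ∫ y in Iic x, f y = ∫ y in a..x, f y := by
  rw [intervalIntegral.integral_of_le hx, ← integral_Icc_eq_integral_Ioc]
  exact setIntegral_eq_of_subset_of_forall_sdiff_eq_zero measurableSet_Iic Icc_subset_Iic_self
    fun y hy => hf y (lt_of_not_ge fun h => hy.2 ⟨h, hy.1⟩)

lemma integral_Iic_eq_zero (hf : ∀ y < a, f y = 0) (hx : x < a) : ∫ y in Iic x, f y = 0 :=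
  setIntegral_eq_zero_of_forall_eq_zero fun y hy => hf y (lt_of_le_of_lt hy hx)

lemma integral_Iic_indicator_Icc (hx : x ∈ Icc a b) :
    ∫ y in Iic x, (Icc a b).indicator f y = ∫ y in a..x, f y := by
  rw [integral_Iic_eq_intervalIntegral (fun y hy => indicator_of_notMem (fun h => hy.not_ge h.1) f)
    hx.1]
  refine intervalIntegral.integral_congr fun y hy => ?_
  rw [uIcc_of_le hx.1] at hy
  exact indicator_of_mem (show y ∈ Icc a b from ⟨hy.1, hy.2.trans hx.2⟩) f

lemma continuous_integral_Iic (hf : ∀ x, IntegrableOn f (Iic x)) :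
    Continuous fun x => ∫ y in Iic x, f y :=
  continuous_iff_continuousAt.2 fun x =>
    (hf (x + 1)).continuousOn_Iic_primitive_Iic.continuousAt (Iic_mem_nhds (lt_add_one x))

lemma ae_hasDerivAt_primitive (hf : IntegrableOn f (Icc a b)) :
    ∀ᵐ x ∂(volume.restrict (Ioo a b)), HasDerivAt (fun z => ∫ s in a..z, f s) (f x) x := by
  rcases le_total b a with hba | hab
  · simp [Ioo_eq_empty_of_le hba]
  have hf' : IntervalIntegrable f volume a b :=
    (intervalIntegrable_iff_integrableOn_Icc_of_le hab).2 hf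
  rw [ae_restrict_iff' measurableSet_Ioo]
  filter_upwards [hf'.ae_hasDerivAt_integral] with x hx hmem
  exact hx (Icc_subset_uIcc (Ioo_subset_Icc_self hmem)) a left_mem_uIcc

lemma hasDerivAt_primitive_primitive (hf : IntegrableOn f (Icc a b)) (hx : x ∈ Ioo a b) :
    HasDerivAt (fun z => ∫ t in a..z, ∫ s in a..t, f s) (∫ s in a..x, f s) x := by
  have hcont : ContinuousOn (fun t => ∫ s in a..t, f s) (Icc a b) :=
    (intervalIntegral.continuousOn_primitive_interval
      (by rwa [uIcc_of_le (hx.1.trans hx.2).le])).mono Icc_subset_uIcc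
  exact intervalIntegral.integral_hasDerivAt_right
    ((hcont.mono (Icc_subset_Icc_right hx.2.le)).intervalIntegrable_of_Icc hx.1.le)
    ((hcont.mono Ioo_subset_Icc_self).stronglyMeasurableAtFilter isOpen_Ioo x hx)
    (hcont.continuousAt (Icc_mem_nhds hx.1 hx.2))

end Primitive

/-! ### Sonine pairs -/

/-- Nonnegative kernels `f` and `k` on the half-line with `f ⋆ k = 1` on `(0, ∞)` (Sonine's
condition): up to one integration, convolution with `k` inverts convolution with `f`. -/
structure IsSoninePair (f k : ℝ → ℝ) : Prop where
  left : IsCausalKernel f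
  right : IsCausalKernel k
  convolution_eq_one : ∀ x > 0, (f ⋆ k) x = 1

lemma IsCausalKernel.isSoninePair_of_laplace {f k : ℝ → ℝ} {c : ℝ} (hf : IsCausalKernel f)
    (hk : IsCausalKernel k) (hf_cont : ContinuousOn f (Ioi 0)) (hk_cont : ContinuousOn k (Ioi 0))
    (hf_ne : ¬ f =ᵐ[volume] 0) (hc : 0 < c)
    (hfk : ∀ t : ℝ, laplace k (c - t * Complex.I) =
      ((c - t * Complex.I) * laplace f (c - t * Complex.I))⁻¹) :
    IsSoninePair f k where
  left := hf
  right := hk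
  convolution_eq_one := by
    have hae : f ⋆ k =ᵐ[volume] heaviside :=
      hf.convolution_ae_eq_of_laplace hk isCausalKernel_heaviside hc fun t => by
        rw [hf.laplace_mul_laplace_of_eq_inv hk hc hf_ne hfk, laplace_heaviside (by simpa using hc)]
    have hEq : EqOn (f ⋆ k) 1 (Ioi 0) := by
      refine Measure.eqOn_open_of_ae_eq (μ := volume) ?_ isOpen_Ioi
        (continuousOn_convolution_Ioi hf.eq_zero hk.eq_zero hf.locallyIntegrable
          hk.locallyIntegrable hf_cont hk_cont) continuousOn_const
      filter_upwards [ae_restrict_of_ae hae, ae_restrict_mem measurableSet_Ioi] with x hx hx0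
      rw [hx, heaviside, indicator_of_mem (Ioi_subset_Ici_self hx0)]
    exact fun x hx => hEq hx

namespace IsSoninePair

variable {f k g : ℝ → ℝ} {a b x : ℝ}

lemma convolution_ae_eq_heaviside (h : IsSoninePair f k) : f ⋆ k =ᵐ[volume] heaviside := by
  filter_upwards [Measure.ae_ne volume (0 : ℝ)] with x hx
  rcases lt_or_gt_of_ne hx with hx | hx
  · rw [convolution_eq_zero_of_lt h.left.eq_zero h.right.eq_zero (by rwa [add_zero]),
      isCausalKernel_heaviside.eq_zero x hx]
  · rw [h.convolution_eq_one x hx, heaviside, indicator_of_mem (mem_Ici.2 hx.le), Pi.one_apply]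

lemma ae_convolutionExistsAt (h : IsSoninePair f k) :
    ∀ᵐ x, ConvolutionExistsAt f k x (ContinuousLinearMap.lsmul ℝ ℝ) := by
  filter_upwards [Measure.ae_ne volume (0 : ℝ)] with x hx
  rcases lt_or_gt_of_ne hx with hx | hx
  · refine (integrable_zero ℝ ℝ volume).congr (ae_of_all _ fun y => ?_)
    rcases lt_or_ge y 0 with hy | hy
    · simp [h.left.eq_zero y hy]
    · simp [h.right.eq_zero (x - y) (by linarith)]
  · exact not_imp_comm.1 integral_undef ((h.convolution_eq_one x hx).trans_ne one_ne_zero)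

lemma convolution_convolution (h : IsSoninePair f k) (hg : AEStronglyMeasurable g)
    (hgx : IntegrableOn g (Iic x)) : (f ⋆ (k ⋆ g)) x = ∫ y in Iic x, g y := by
  have hH := h.convolution_ae_eq_heaviside
  have hexists : ConvolutionExistsAt (f ⋆ k) g x (ContinuousLinearMap.lsmul ℝ ℝ) :=
    (heaviside_convolutionExistsAt hgx).congr <| hH.symm.mono fun y hy => by
      beta_reduce
      rw [hy]
  rw [← convolution_assoc_of_nonneg h.left.measurable h.right.measurable hg h.left.nonneg
    h.right.nonneg h.ae_convolutionExistsAt hexists, convolution_congr _ hH .rfl,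
    heaviside_convolution]

lemma convolution_primitive (h : IsSoninePair f k) (hx : 0 ≤ x) :
    (f ⋆ fun y => ∫ t in Iic y, k t) x = x := by
  have hH := isCausalKernel_heaviside
  simp only [← convolution_heaviside]
  rw [h.convolution_convolution hH.measurable.aestronglyMeasurable (hH.integrableOn_Iic x),
    heaviside, setIntegral_indicator measurableSet_Ici, inter_comm, Ici_inter_Iic]
  simp [hx]

lemma convolution_primitive_convolution (h : IsSoninePair f k) (hg : Integrable g)
    (hg_supp : HasCompactSupport g) :
    (f ⋆ ((fun y => ∫ t in Iic y, k t) ⋆ g)) x = ∫ y in Iic x, ∫ t in Iic y, g t := by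
  have hk := h.right
  have hH := isCausalKernel_heaviside
  set K : ℝ → ℝ := fun y => ∫ t in Iic y, k t
  have hK : K = k ⋆ heaviside := (funext (convolution_heaviside k)).symm
  have hG : heaviside ⋆ g = fun y => ∫ t in Iic y, g t := funext (heaviside_convolution g)
  have hG_cont : Continuous fun y => ∫ t in Iic y, g t :=
    continuous_integral_Iic fun _ => hg.integrableOn
  obtain ⟨a, ha⟩ := hg_supp.isCompact.bddBelow
  have hG_zero : ∀ y < a, ∫ t in Iic y, g t = 0 := fun y hy => integral_Iic_eq_zero
    (fun t ht => image_eq_zero_of_notMem_tsupport fun hmem => ht.not_ge (ha hmem)) hy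
  have hG_int : IntegrableOn (fun y => ∫ t in Iic y, g t) (Iic x) :=
    (hG_cont.integrableOn_Icc (a := a)).of_forall_sdiff_eq_zero
      measurableSet_Iic fun y hy => hG_zero y (lt_of_not_ge fun hay => hy.2 ⟨hay, hy.1⟩)
  have hK_exists : ConvolutionExists K g (ContinuousLinearMap.lsmul ℝ ℝ) :=
    hg_supp.convolutionExists_right_of_continuous_left _
      (continuous_integral_Iic hk.integrableOn_Iic) hg.locallyIntegrable
  have hKg : K ⋆ g = k ⋆ fun y => ∫ t in Iic y, g t := by
    ext y
    rw [hK, convolution_assoc_of_nonneg hk.measurable hH.measurable hg.aestronglyMeasurable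
      hk.nonneg hH.nonneg
      (ae_of_all _ fun z => convolutionExistsAt_heaviside (hk.integrableOn_Iic z))
      (hK ▸ hK_exists y), hG]
  rw [hKg, h.convolution_convolution hG_cont.aestronglyMeasurable hG_int]

lemma integral_mul_potential (h : IsSoninePair f k) (hg : IntegrableOn g (Icc a b))
    (hx : x ∈ Icc a b) :
    ∫ y in (0 : ℝ)..(x - a), f y *
        (Icc a b).indicator (fun t => ∫ s in a..t, k (t - s) * g s) (x - y) =
      ∫ s in a..x, g s := by
  have hg' := hg.integrable_indicator measurableSet_Icc
  rw [integral_mul_indicator_potential h.left.eq_zero h.right.eq_zero g hx,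
    h.convolution_convolution hg'.aestronglyMeasurable hg'.integrableOn,
    integral_Iic_indicator_Icc hx]

lemma integral_mul_primitive_potential (h : IsSoninePair f k) (hg : IntegrableOn g (Icc a b))
    (hx : x ∈ Icc a b) :
    ∫ y in (0 : ℝ)..(x - a), f y * (Icc a b).indicator
        (fun t => ∫ s in a..t, (∫ r in Iic (t - s), k r) * g s) (x - y) =
      ∫ t in a..x, ∫ s in a..t, g s := by
  have hg0 : ∀ y < a, (Icc a b).indicator g y = 0 := fun y hy =>
    indicator_of_notMem (fun h => hy.not_ge h.1) g
  rw [integral_mul_indicator_potential (q := fun y => ∫ r in Iic y, k r) h.left.eq_zero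
      (fun y hy => integral_Iic_eq_zero h.right.eq_zero hy) g hx,
    h.convolution_primitive_convolution (hg.integrable_indicator measurableSet_Icc)
      (.of_support_subset_isCompact isCompact_Icc support_indicator_subset),
    integral_Iic_eq_intervalIntegral (fun y hy => integral_Iic_eq_zero hg0 hy) hx.1]
  refine intervalIntegral.integral_congr fun t ht => ?_
  rw [uIcc_of_le hx.1] at ht
  exact integral_Iic_indicator_Icc ⟨ht.1, ht.2.trans hx.2⟩

lemma ae_deriv_integral_mul_potential (h : IsSoninePair f k) (hg : IntegrableOn g (Icc a b)) :
    ∀ᵐ x ∂(volume.restrict (Ioo a b)),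
      deriv (fun z => ∫ y in (0 : ℝ)..(z - a), f y *
        (Icc a b).indicator (fun t => ∫ s in a..t, k (t - s) * g s) (z - y)) x = g x := by
  filter_upwards [ae_hasDerivAt_primitive hg, ae_restrict_mem measurableSet_Ioo] with x hx hmem
  refine (hx.congr_of_eventuallyEq ?_).deriv
  filter_upwards [isOpen_Ioo.mem_nhds hmem] with z hz
  exact h.integral_mul_potential hg (Ioo_subset_Icc_self hz)

lemma ae_iteratedDeriv_two_integral_mul_primitive_potential (h : IsSoninePair f k)
    (hg : IntegrableOn g (Icc a b)) :
    ∀ᵐ x ∂(volume.restrict (Ioo a b)),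
      iteratedDeriv 2 (fun z => ∫ y in (0 : ℝ)..(z - a), f y * (Icc a b).indicator
        (fun t => ∫ s in a..t, (∫ r in Iic (t - s), k r) * g s) (z - y)) x = g x := by
  filter_upwards [ae_hasDerivAt_primitive hg, ae_restrict_mem measurableSet_Ioo] with x hx hmem
  rw [iteratedDeriv_succ, iteratedDeriv_one]
  refine (hx.congr_of_eventuallyEq ?_).deriv
  filter_upwards [isOpen_Ioo.mem_nhds hmem] with z hz
  refine ((hasDerivAt_primitive_primitive hg hz).congr_of_eventuallyEq ?_).deriv
  filter_upwards [isOpen_Ioo.mem_nhds hz] with w hw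
  exact h.integral_mul_primitive_potential hg (Ioo_subset_Icc_self hw)

lemma convolution_eventuallyEq_one (h : IsSoninePair f k) (hx : 0 < x) :
    (f ⋆ k) =ᶠ[𝓝 x] fun _ => 1 := by
  filter_upwards [Ioi_mem_nhds hx] with z hz using h.convolution_eq_one z hz

lemma convolution_primitive_eventuallyEq_id (h : IsSoninePair f k) (hx : 0 < x) :
    (f ⋆ fun y => ∫ t in Iic y, k t) =ᶠ[𝓝 x] id := by
  filter_upwards [Ioi_mem_nhds hx] with z hz using h.convolution_primitive (le_of_lt hz)

end IsSoninePair

/-! ### The function `Φ` -/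

section LayerCake

lemma lintegral_measure_Ioi_mul (μ : Measure ℝ) {g : ℝ → ℝ}
    (hg : ∀ t > 0, IntervalIntegrable g volume 0 t) (hg0 : ∀ t > 0, 0 ≤ g t) :
    ∫⁻ t in Ioi (0 : ℝ), μ (Ioi t) * ENNReal.ofReal (g t) =
      ∫⁻ z in Ioi (0 : ℝ), ENNReal.ofReal (∫ t in (0 : ℝ)..z, g t) ∂μ := by
  rw [lintegral_comp_eq_lintegral_meas_lt_mul (μ.restrict (Ioi 0)) (f := fun z => z)
    (ae_restrict_of_forall_mem measurableSet_Ioi fun z hz => (mem_Ioi.1 hz).le) aemeasurable_id hg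
    (ae_restrict_of_forall_mem measurableSet_Ioi hg0)]
  refine setLIntegral_congr_fun measurableSet_Ioi fun t ht => ?_
  change _ = μ.restrict (Ioi 0) (Ioi t) * _
  rw [Measure.restrict_apply measurableSet_Ioi, inter_eq_left.2 (Ioi_subset_Ioi (le_of_lt ht))]

lemma measurable_measure_Ioi (μ : Measure ℝ) : Measurable fun t => μ (Ioi t) :=
  Antitone.measurable fun _ _ hst => measure_mono (Ioi_subset_Ioi hst)

variable {c z : ℝ}

lemma intervalIntegral_exp_neg_mul (hc : c ≠ 0) (z : ℝ) :
    ∫ t in (0 : ℝ)..z, Real.exp (-c * t) = (1 - Real.exp (-c * z)) / c := by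
  rw [intervalIntegral.integral_comp_mul_left _ (neg_ne_zero.2 hc), integral_exp, mul_zero,
    Real.exp_zero, smul_eq_mul]
  field_simp
  ring

lemma intervalIntegral_one_sub_exp_neg_mul (hc : c ≠ 0) (z : ℝ) :
    ∫ t in (0 : ℝ)..z, (1 - Real.exp (-c * t)) / c =
      (c * z - 1 + Real.exp (-c * z)) / c ^ 2 := by
  rw [intervalIntegral.integral_div, intervalIntegral.integral_sub (by simp)
    (Continuous.intervalIntegrable (by fun_prop) _ _), intervalIntegral_exp_neg_mul hc,
    intervalIntegral.integral_const, smul_eq_mul]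
  field_simp
  ring

lemma one_sub_exp_neg_mul_nonneg (hc : 0 < c) (hz : 0 ≤ z) : 0 ≤ 1 - Real.exp (-c * z) :=
  sub_nonneg.2 <| Real.exp_le_one_iff.2 <| by nlinarith

lemma compensated_exp_div_sq_le (hc : 0 < c) (hz : 0 ≤ z) :
    (c * z - 1 + Real.exp (-c * z)) / c ^ 2 ≤ max 1 c⁻¹ * min (z ^ 2) z := by
  have hcz : 0 ≤ c * z := mul_nonneg hc.le hz
  have hexp_le : Real.exp (-c * z) ≤ 1 - c * z + (c * z) ^ 2 := by
    rw [neg_mul, Real.exp_neg]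
    refine (inv_anti₀ (by positivity) (Real.add_one_le_exp _)).trans ?_
    rw [inv_le_iff_one_le_mul₀ (by positivity)]
    nlinarith [pow_nonneg hcz 3]
  have hsq : (c * z - 1 + Real.exp (-c * z)) / c ^ 2 ≤ z ^ 2 := by
    rw [div_le_iff₀ (by positivity)]
    linarith
  have hlin : (c * z - 1 + Real.exp (-c * z)) / c ^ 2 ≤ c⁻¹ * z := by
    rw [div_le_iff₀ (by positivity), show c⁻¹ * z * c ^ 2 = c * z by field_simp]
    linarith [one_sub_exp_neg_mul_nonneg hc hz]
  rw [mul_min_of_nonneg _ _ (by positivity)]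
  exact le_min (hsq.trans (le_mul_of_one_le_left (sq_nonneg z) (le_max_left _ _)))
    (hlin.trans (mul_le_mul_of_nonneg_right (le_max_right _ _) hz))

lemma compensated_exp_div_sq_pos (hc : 0 < c) (hz : 0 < z) :
    0 < (c * z - 1 + Real.exp (-c * z)) / c ^ 2 := by
  have := Real.add_one_lt_exp (x := -c * z) (by nlinarith)
  exact div_pos (by linarith) (by positivity)

lemma lintegral_measure_Ioi_mul_one_sub_exp (μ : Measure ℝ) (hc : 0 < c) :
    ∫⁻ t in Ioi (0 : ℝ), μ (Ioi t) * ENNReal.ofReal ((1 - Real.exp (-c * t)) / c) =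
      ∫⁻ z in Ioi (0 : ℝ), ENNReal.ofReal ((c * z - 1 + Real.exp (-c * z)) / c ^ 2) ∂μ := by
  simp only [lintegral_measure_Ioi_mul μ (g := fun t => (1 - Real.exp (-c * t)) / c)
    (fun t _ => Continuous.intervalIntegrable (by fun_prop) _ _)
    (fun t ht => div_nonneg (one_sub_exp_neg_mul_nonneg hc ht.le) hc.le),
    intervalIntegral_one_sub_exp_neg_mul hc.ne']

lemma lintegral_lintegral_measure_Ioi_mul_exp (μ : Measure ℝ) (hc : 0 < c) :
    ∫⁻ x in Ioi (0 : ℝ), (∫⁻ y in Ioi x, μ (Ioi y)) * ENNReal.ofReal (Real.exp (-c * x)) =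
      ∫⁻ z in Ioi (0 : ℝ), ENNReal.ofReal ((c * z - 1 + Real.exp (-c * z)) / c ^ 2) ∂μ := by
  have hdensity : ∀ x, ∫⁻ y in Ioi x, μ (Ioi y) =
      volume.withDensity (fun y => μ (Ioi y)) (Ioi x) := fun x =>
    (withDensity_apply _ measurableSet_Ioi).symm
  simp only [hdensity]
  rw [lintegral_measure_Ioi_mul _ (g := fun x => Real.exp (-c * x))
      (fun t _ => Continuous.intervalIntegrable (by fun_prop) _ _) (fun t _ => (Real.exp_pos _).le),
    setLIntegral_withDensity_eq_setLIntegral_mul _ (measurable_measure_Ioi μ) ?_ measurableSet_Ioi,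
    ← lintegral_measure_Ioi_mul_one_sub_exp μ hc]
  · simp only [intervalIntegral_exp_neg_mul hc.ne', Pi.mul_apply]
  · simp only [intervalIntegral_exp_neg_mul hc.ne']
    fun_prop

end LayerCake

lemma levyTail_nonneg (φ : Measure ℝ) (y : ℝ) : 0 ≤ levyTail φ y := ENNReal.toReal_nonneg

lemma measurable_levyTail (φ : Measure ℝ) : Measurable (levyTail φ) :=
  (measurable_measure_Ioi φ).ennreal_toReal

lemma PhiFn_of_pos (φ : Measure ℝ) {x : ℝ} (hx : 0 < x) :
    PhiFn φ x = ∫ y in Ioi x, levyTail φ y := if_pos hx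

lemma PhiFn_of_nonpos (φ : Measure ℝ) {x : ℝ} (hx : x ≤ 0) : PhiFn φ x = 0 :=
  if_neg (not_lt.2 hx)

lemma PhiFn_nonneg (φ : Measure ℝ) (x : ℝ) : 0 ≤ PhiFn φ x := by
  unfold PhiFn
  split_ifs
  · exact integral_nonneg (levyTail_nonneg φ)
  · exact le_rfl

namespace H0

variable {φ : Measure ℝ} {c x : ℝ}

lemma lintegral_compensated_exp_lt_top (h : H0 φ) (hc : 0 < c) :
    ∫⁻ z in Ioi (0 : ℝ), ENNReal.ofReal ((c * z - 1 + Real.exp (-c * z)) / c ^ 2) ∂φ < ∞ := by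
  have hle : ∀ z ∈ Ioi (0 : ℝ), ENNReal.ofReal ((c * z - 1 + Real.exp (-c * z)) / c ^ 2) ≤
      ENNReal.ofReal (max 1 c⁻¹) * ENNReal.ofReal (min (z ^ 2) z) := fun z hz => by
    rw [← ENNReal.ofReal_mul (by positivity)]
    exact ENNReal.ofReal_le_ofReal (compensated_exp_div_sq_le hc (le_of_lt hz))
  refine (setLIntegral_mono (by fun_prop) hle).trans_lt ?_
  rw [lintegral_const_mul _ (by fun_prop)]
  exact ENNReal.mul_lt_top ENNReal.ofReal_lt_top h.2.1

lemma lintegral_measure_Ioi_lt_top (h : H0 φ) (hx : 0 < x) :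
    ∫⁻ y in Ioi x, φ (Ioi y) < ∞ := by
  have hx' : 0 < (1 - Real.exp (-1 * x)) / 1 := by simpa using hx
  have hfin := h.lintegral_compensated_exp_lt_top one_pos
  rw [← lintegral_measure_Ioi_mul_one_sub_exp φ one_pos] at hfin
  have hle : (∫⁻ y in Ioi x, φ (Ioi y)) * ENNReal.ofReal ((1 - Real.exp (-1 * x)) / 1) ≤
      ∫⁻ t in Ioi (0 : ℝ), φ (Ioi t) * ENNReal.ofReal ((1 - Real.exp (-1 * t)) / 1) := by
    rw [← lintegral_mul_const _ (measurable_measure_Ioi φ)]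
    refine (setLIntegral_mono ((measurable_measure_Ioi φ).mul (by fun_prop)) fun y hy => ?_).trans
      (lintegral_mono_set (Ioi_subset_Ioi hx.le))
    have hexp := Real.exp_le_exp.2 (show -1 * y ≤ -1 * x by linarith [mem_Ioi.1 hy])
    exact mul_le_mul_right (ENNReal.ofReal_le_ofReal (by linarith)) _
  exact ENNReal.lt_top_of_mul_ne_top_left (hle.trans_lt hfin).ne (ENNReal.ofReal_pos.2 hx').ne'

lemma ofReal_levyTail_ae_eq (h : H0 φ) (hx : 0 < x) :
    (fun y => ENNReal.ofReal (levyTail φ y)) =ᵐ[volume.restrict (Ioi x)] fun y => φ (Ioi y) := by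
  filter_upwards [ae_lt_top (measurable_measure_Ioi φ) (h.lintegral_measure_Ioi_lt_top hx).ne]
    with y hy using ENNReal.ofReal_toReal hy.ne

lemma integrableOn_levyTail (h : H0 φ) (hx : 0 < x) : IntegrableOn (levyTail φ) (Ioi x) := by
  refine ⟨(measurable_levyTail φ).aestronglyMeasurable, ?_⟩
  rw [hasFiniteIntegral_iff_ofReal (ae_of_all _ (levyTail_nonneg φ)),
    lintegral_congr_ae (h.ofReal_levyTail_ae_eq hx)]
  exact h.lintegral_measure_Ioi_lt_top hx

lemma ofReal_PhiFn (h : H0 φ) (hx : 0 < x) :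
    ENNReal.ofReal (PhiFn φ x) = ∫⁻ y in Ioi x, φ (Ioi y) := by
  rw [PhiFn_of_pos φ hx, ofReal_integral_eq_lintegral_ofReal (h.integrableOn_levyTail hx)
    (ae_of_all _ (levyTail_nonneg φ)), lintegral_congr_ae (h.ofReal_levyTail_ae_eq hx)]

lemma continuousOn_PhiFn (h : H0 φ) : ContinuousOn (PhiFn φ) (Ioi 0) := by
  refine continuousOn_of_forall_continuousAt fun x (hx : 0 < x) => ?_
  have hcont := (h.integrableOn_levyTail (half_pos hx)).continuousOn_Ici_primitive_Ioi
  refine (hcont.continuousAt (Ici_mem_nhds (half_lt_self hx))).congr ?_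
  filter_upwards [Ioi_mem_nhds hx] with z hz using (PhiFn_of_pos φ hz).symm

lemma measurable_PhiFn (h : H0 φ) : Measurable (PhiFn φ) :=
  measurable_of_continuousOn_Ioi (fun _ hx => PhiFn_of_nonpos φ (le_of_lt hx)) h.continuousOn_PhiFn

lemma lintegral_exp_mul_PhiFn (h : H0 φ) (hc : 0 < c) :
    ∫⁻ x, ENNReal.ofReal (Real.exp (-c * x) * PhiFn φ x) =
      ∫⁻ z in Ioi (0 : ℝ), ENNReal.ofReal ((c * z - 1 + Real.exp (-c * z)) / c ^ 2) ∂φ := by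
  have hsupp : (fun x => ENNReal.ofReal (Real.exp (-c * x) * PhiFn φ x)).support ⊆ Ioi 0 := by
    refine Function.support_subset_iff'.2 fun x hx => ?_
    rw [PhiFn_of_nonpos φ (not_lt.1 hx), mul_zero, ENNReal.ofReal_zero]
  rw [← lintegral_lintegral_measure_Ioi_mul_exp φ hc, ← setLIntegral_eq_of_support_subset hsupp]
  refine setLIntegral_congr_fun measurableSet_Ioi fun x hx => ?_
  rw [ENNReal.ofReal_mul (Real.exp_pos _).le, h.ofReal_PhiFn hx, mul_comm]

lemma isCausalKernel_PhiFn (h : H0 φ) : IsCausalKernel (PhiFn φ) where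
  measurable := h.measurable_PhiFn
  nonneg := PhiFn_nonneg φ
  eq_zero _ hx := PhiFn_of_nonpos φ (le_of_lt hx)
  integrable_exp_mul c hc := by
    have hΦm := h.measurable_PhiFn
    refine ⟨by fun_prop, ?_⟩
    rw [hasFiniteIntegral_iff_ofReal (ae_of_all _ fun x =>
      mul_nonneg (Real.exp_pos _).le (PhiFn_nonneg φ x)), h.lintegral_exp_mul_PhiFn hc]
    exact h.lintegral_compensated_exp_lt_top hc

lemma not_PhiFn_ae_eq_zero (h : H0 φ) : ¬ PhiFn φ =ᵐ[volume] 0 := fun hΦ => by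
  have h0 : ∫⁻ z in Ioi (0 : ℝ),
      ENNReal.ofReal ((1 * z - 1 + Real.exp (-1 * z)) / 1 ^ 2) ∂φ = 0 := by
    rw [← h.lintegral_exp_mul_PhiFn one_pos]
    refine lintegral_eq_zero_of_ae_eq_zero ?_
    filter_upwards [hΦ] with x hx
    rw [hx, Pi.zero_apply, mul_zero, ENNReal.ofReal_zero]
    rfl
  have hφ : φ (Ioi 0) = 0 := by
    rw [measure_eq_zero_iff_ae_notMem]
    filter_upwards [(setLIntegral_eq_zero_iff measurableSet_Ioi (by fun_prop)).1 h0]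
      with z hz hz_pos
    exact (compensated_exp_div_sq_pos one_pos hz_pos).not_ge (ENNReal.ofReal_eq_zero.1 (hz hz_pos))
  have := h.2.2
  rw [setLIntegral_measure_zero _ _ (measure_mono_null Ioo_subset_Ioi_self hφ)] at this
  exact ENNReal.zero_ne_top this

end H0

/-! ### The scale kernel -/

lemma integral_comp_sub_mul_eq_convolution (f k : ℝ → ℝ) (a x : ℝ) :
    ∫ y, f (x - y) * k y = (f ⋆ fun y => k (y - a)) (x + a) := by
  rw [convolution_lsmul_swap, ← integral_sub_right_eq_self _ a]
  simp only [smul_eq_mul, sub_sub_eq_add_sub]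

lemma kIter_one_sub_one (k : ℝ → ℝ) (x : ℝ) : kIter k 1 (x - 1) = ∫ y in Iic x, k (y - 1) := by
  have htranslate := (measurePreserving_sub_right volume (1 : ℝ)).setIntegral_preimage_emb
    (measurableEmbedding_subRight 1) k (Iic (x - 1))
  rw [preimage_sub_const_Iic, sub_add_cancel] at htranslate
  exact htranslate.symm

namespace IsScaleKernel

variable {φ : Measure ℝ} {k : ℝ → ℝ}

lemma isCausalKernel (hk : IsScaleKernel φ k) : IsCausalKernel fun x => k (x - 1) := by
  obtain ⟨hzero, hnonneg, hcont, -, -, hlaplace⟩ := hk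
  have hzero' : ∀ x < 0, k (x - 1) = 0 := fun x hx => hzero _ (by linarith)
  refine ⟨?_, ?_, hzero', fun c hc => ?_⟩
  · exact (measurable_of_continuousOn_Ioi hzero hcont).comp (measurable_sub_const 1)
  · intro x
    rcases lt_or_ge x 0 with hx | hx
    · exact (hzero' x hx).ge
    · exact hnonneg _ (by linarith)
  · have hint : IntegrableOn (fun x => Real.exp (-c * x) * k (x - 1)) (Ioi 0) := by
      refine (hlaplace c (by simpa using hc)).1.re.congr (ae_of_all _ fun x => ?_)
      beta_reduce
      rw [show Complex.exp (-c * x) * (k (x - 1) : ℂ) =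
        ((Real.exp (-c * x) * k (x - 1) : ℝ) : ℂ) by push_cast; rfl]
      exact Complex.ofReal_re _
    refine (hint.congr_set_ae Ioi_ae_eq_Ici.symm).integrable_of_forall_notMem_eq_zero
      fun x hx => ?_
    rw [hzero' x (not_le.1 hx), mul_zero]

lemma continuousOn_comp_sub_one (hk : IsScaleKernel φ k) :
    ContinuousOn (fun x => k (x - 1)) (Ioi 0) :=
  hk.2.2.1.comp (by fun_prop) fun x (hx : 0 < x) => mem_Ioi.2 (by linarith)

lemma laplace_eq_inv (hk : IsScaleKernel φ k) {ξ : ℂ} (hξ : 0 < ξ.re) :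
    laplace (fun x => k (x - 1)) ξ = (ξ * laplace (PhiFn φ) ξ)⁻¹ := by
  have hξ0 : ξ ≠ 0 := fun h => by simp [h] at hξ
  calc laplace (fun x => k (x - 1)) ξ = ξ / (ξ ^ 2 * laplace (PhiFn φ) ξ) :=
        (hk.2.2.2.2.2 ξ hξ).2
    _ = (ξ * laplace (PhiFn φ) ξ)⁻¹ := by
        rw [pow_two, mul_assoc, div_mul_cancel_left₀ hξ0]

lemma isSoninePair (hk : IsScaleKernel φ k) (hφ : H0 φ) :
    IsSoninePair (PhiFn φ) fun x => k (x - 1) :=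
  hφ.isCausalKernel_PhiFn.isSoninePair_of_laplace hk.isCausalKernel hφ.continuousOn_PhiFn
    hk.continuousOn_comp_sub_one hφ.not_PhiFn_ae_eq_zero one_pos
    fun t => hk.laplace_eq_inv (by simp)

end IsScaleKernel

/-- right-inverse identities `∂^ψ_+ I^ψ_+ f = f = D^ψ_+ I^ψ_+ f` a.e.
on `(-1,1)`, and the kernel identities `D^ψ_+ k₋₁⁺ = D^ψ_+ k₀⁺ = 0` and
`∂^ψ_+ k₀⁺ = 0` on `(-1,1)`. -/
theorem right_inverse_and_kernel_identities (φ : Measure ℝ) (hH0 : H0 φ) (k : ℝ → ℝ)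
    (hk : IsScaleKernel φ k) :
    (∀ f : ℝ → ℝ, IntegrableOn f (Icc (-1) 1) →
      (∀ᵐ x ∂(volume.restrict (Ioo (-1 : ℝ) 1)),
        deriv (fun z : ℝ => ∫ y in (0 : ℝ)..(z + 1),
          PhiFn φ y *
            (Icc (-1 : ℝ) 1).indicator
              (fun t : ℝ => ∫ s in (-1 : ℝ)..t, k (t - s - 1) * f s) (z - y)) x = f x) ∧
      (∀ᵐ x ∂(volume.restrict (Ioo (-1 : ℝ) 1)),
        iteratedDeriv 2 (fun z : ℝ => ∫ y in (0 : ℝ)..(z + 1),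
          PhiFn φ y *
            (Icc (-1 : ℝ) 1).indicator
              (fun t : ℝ => ∫ s in (-1 : ℝ)..t, kIter k 1 (t - s - 1) * f s) (z - y)) x
          = f x)) ∧
    (∀ x ∈ Ioo (-1 : ℝ) 1,
      iteratedDeriv 2 (fun z : ℝ => ∫ y : ℝ, PhiFn φ (z - y) * k y) x = 0 ∧
      iteratedDeriv 2 (fun z : ℝ => ∫ y : ℝ, PhiFn φ (z - y) * kIter k 1 y) x = 0 ∧
      deriv (fun z : ℝ => ∫ y : ℝ, PhiFn φ (z - y) * k y) x = 0) := by
  have hpair := hk.isSoninePair hH0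
  refine ⟨fun f hf => ⟨?_, ?_⟩, fun x hx => ?_⟩
  · simpa only [sub_neg_eq_add] using hpair.ae_deriv_integral_mul_potential hf
  · simpa only [sub_neg_eq_add, kIter_one_sub_one] using
      hpair.ae_iteratedDeriv_two_integral_mul_primitive_potential hf
  · have hx0 : 0 < x + 1 := by linarith [hx.1]
    simp only [integral_comp_sub_mul_eq_convolution _ _ 1, kIter_one_sub_one,
      iteratedDeriv_comp_add_const, deriv_comp_add_const]
    rw [(hpair.convolution_eventuallyEq_one hx0).iteratedDeriv_eq,
      (hpair.convolution_primitive_eventuallyEq_id hx0).iteratedDeriv_eq,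
      (hpair.convolution_eventuallyEq_one hx0).deriv_eq]
    simp [iteratedDeriv_const, iteratedDeriv_id]
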